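/- Let n be a positive integer and let f : ℝ^d → ℂ be a continuous function satisfying the Popoviciu–Ionescu equation of order n in d variables: for all x, h ∈ ℝ^d, the determinant of the (n+1)×(n+1) matrix whose (i,j) entry is f(x + (i+j)h), 0 ≤ i, j ≤ n, equals zero. Then the restriction of f to any line is an exponential polynomial: for every x_0, h_0 ∈ ℝ^d, the function t ↦ f(x_0 + t h_0) is an exponential polynomial on ℝ. -/

import Mathlib

/-- `g : ℝ → ℂ` is an exponential polynomial: a finite sum of terms
`Q_j(t) * exp(μ_j t)` with `Q_j` complex polynomials and `μ_j ∈ ℂ`. -/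
def IsExpPoly1 (g : ℝ → ℂ) : Prop :=
  ∃ (m : ℕ) (Q : Fin m → Polynomial ℂ) (mu : Fin m → ℂ),
    ∀ t : ℝ, g t = ∑ j, Polynomial.eval (t : ℂ) (Q j) * Complex.exp (mu j * t)

/-- The `k × k` Hankel matrix of the bi-infinite sequence `a` starting at index `m`. -/
def hankelMatrix (a : ℤ → ℂ) (k : ℕ) (m : ℤ) : Matrix (Fin k) (Fin k) ℂ :=
  Matrix.of fun i j => a (m + i + j)

lemma exists_hankel_relation {a : ℤ → ℂ} {k : ℕ} {m : ℤ} (h : (hankelMatrix a k m).det = 0) :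
    ∃ c : Fin k → ℂ, c ≠ 0 ∧ ∀ i : Fin k, ∑ j, c j * a (m + i + j) = 0 := by
  obtain ⟨c, hc, hmul⟩ := Matrix.exists_mulVec_eq_zero_iff.mpr h
  refine ⟨c, hc, fun i => ?_⟩
  have := congrFun hmul i
  simpa [Matrix.mulVec, dotProduct, hankelMatrix, mul_comm] using this

lemma eq_zero_of_hankel_relation {a : ℤ → ℂ} {k : ℕ} {m : ℤ}
    (h : (hankelMatrix a k m).det ≠ 0) {c : Fin k → ℂ}
    (hc : ∀ i : Fin k, ∑ j, c j * a (m + i + j) = 0) : c = 0 := by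
  by_contra hne
  refine h (Matrix.exists_mulVec_eq_zero_iff.mp ⟨c, hne, ?_⟩)
  ext i
  simpa [Matrix.mulVec, dotProduct, hankelMatrix, mul_comm] using hc i

lemma init_eq_zero_of_hankel_relation {a : ℤ → ℂ} {k : ℕ} {m : ℤ}
    (h : (hankelMatrix a k m).det ≠ 0) {w : Fin (k + 1) → ℂ}
    (hw : ∀ i : Fin k, ∑ j, w j * a (m + i + j) = 0) (hlast : w (Fin.last k) = 0) :
    w = 0 := by
  have hinit : (fun j : Fin k => w j.castSucc) = 0 := by
    refine eq_zero_of_hankel_relation h fun i => ?_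
    simpa [Fin.sum_univ_castSucc, hlast] using hw i
  ext j
  induction j using Fin.lastCases with
  | last => exact hlast
  | cast j => exact congrFun hinit j

lemma tail_eq_zero_of_hankel_relation {a : ℤ → ℂ} {k : ℕ} {m : ℤ}
    (h : (hankelMatrix a k (m + 1)).det ≠ 0) {w : Fin (k + 1) → ℂ}
    (hw : ∀ i : Fin k, ∑ j, w j * a (m + i + j) = 0) (hzero : w 0 = 0) :
    w = 0 := by
  have htail : (fun j : Fin k => w j.succ) = 0 := by
    refine eq_zero_of_hankel_relation h fun i => ?_
    have := hw i
    rw [Fin.sum_univ_succ, hzero, zero_mul, zero_add] at this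
    rw [← this]
    refine Finset.sum_congr rfl fun j _ => ?_
    congr 2
    push_cast [Fin.val_succ]
    ring
  ext j
  induction j using Fin.cases with
  | zero => exact hzero
  | succ j => exact congrFun htail j

lemma det_hankelMatrix_succ_eq_zero {a : ℤ → ℂ} {k : ℕ} {m : ℤ}
    (hbig : (hankelMatrix a (k + 1) m).det = 0) (h : (hankelMatrix a k m).det = 0) :
    (hankelMatrix a k (m + 1)).det = 0 := by
  by_contra hne
  obtain ⟨c, hc, hcrel⟩ := exists_hankel_relation h
  obtain ⟨w, hw, hwrel⟩ := exists_hankel_relation hbig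
  set c' : Fin (k + 1) → ℂ := Fin.snoc c 0 with hc'
  have hc'last : c' (Fin.last k) = 0 := by simp [hc']
  have hc'rel : ∀ i : Fin k, ∑ j, c' j * a (m + i + j) = 0 := by
    intro i
    simpa [hc', Fin.sum_univ_castSucc] using hcrel i
  have hc'zero : c' 0 ≠ 0 := by
    intro h0
    have := tail_eq_zero_of_hankel_relation hne hc'rel h0
    apply hc
    ext j
    simpa [hc'] using congrFun this j.castSucc
  have hz : (fun j => c' 0 * w j - w 0 * c' j) = 0 := by
    refine tail_eq_zero_of_hankel_relation hne (fun i => ?_) (by ring)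
    have h1 := hwrel i.castSucc
    have h2 := hc'rel i
    simp only [Fin.val_castSucc] at h1
    simp only [sub_mul, mul_assoc, Finset.sum_sub_distrib, ← Finset.mul_sum, h1, h2]
    simp
  have hwlast : w (Fin.last k) = 0 := by
    have := congrFun hz (Fin.last k)
    simpa [hc'last, hc'zero] using this
  refine hw (init_eq_zero_of_hankel_relation hne (fun i => ?_) hwlast)
  have := hwrel i.succ
  rw [← this]
  refine Finset.sum_congr rfl fun j _ => ?_
  congr 2
  push_cast [Fin.val_succ]
  ring

lemma det_hankelMatrix_comp_neg (a : ℤ → ℂ) (k : ℕ) (m : ℤ) :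
    (hankelMatrix (fun x => a (-x)) k m).det = (hankelMatrix a k (2 - m - 2 * k)).det := by
  rw [← Matrix.det_submatrix_equiv_self Fin.revPerm (hankelMatrix a k _)]
  congr 1
  ext i j
  simp only [hankelMatrix, Matrix.of_apply, Matrix.submatrix_apply, Fin.revPerm_apply, Fin.val_rev]
  congr 1
  have := i.isLt
  have := j.isLt
  omega

lemma det_hankelMatrix_pred_eq_zero {a : ℤ → ℂ} {k : ℕ}
    (hbig : ∀ m, (hankelMatrix a (k + 1) m).det = 0) {m : ℤ}
    (h : (hankelMatrix a k m).det = 0) : (hankelMatrix a k (m - 1)).det = 0 := by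
  have key := det_hankelMatrix_succ_eq_zero (a := fun x => a (-x)) (k := k)
    (m := 2 - m - 2 * k) (by rw [det_hankelMatrix_comp_neg]; exact hbig _)
    (by rw [det_hankelMatrix_comp_neg]; convert h using 2; ring_nf)
  rw [det_hankelMatrix_comp_neg] at key
  convert key using 2
  ring_nf

lemma det_hankelMatrix_ne_zero {a : ℤ → ℂ} {k : ℕ}
    (hbig : ∀ m, (hankelMatrix a (k + 1) m).det = 0) {m₀ : ℤ}
    (h : (hankelMatrix a k m₀).det ≠ 0) (m : ℤ) : (hankelMatrix a k m).det ≠ 0 := by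
  induction m using Int.inductionOn' (b := m₀) with
  | zero => exact h
  | succ m _ ih =>
    intro h0
    exact ih (by simpa using det_hankelMatrix_pred_eq_zero hbig h0)
  | pred m _ ih =>
    intro h0
    exact ih (by simpa using det_hankelMatrix_succ_eq_zero (hbig _) h0)

lemma exists_recurrence {a : ℤ → ℂ} {k : ℕ}
    (hbig : ∀ m, (hankelMatrix a (k + 1) m).det = 0)
    (h : ∀ m, (hankelMatrix a k m).det ≠ 0) :
    ∃ w : Fin (k + 1) → ℂ, w 0 ≠ 0 ∧ w (Fin.last k) ≠ 0 ∧
      ∀ m : ℤ, ∑ j, w j * a (m + j) = 0 := by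
  have hloc : ∀ m, ∃ w : Fin (k + 1) → ℂ, w 0 ≠ 0 ∧ w (Fin.last k) ≠ 0 ∧
      ∀ i : Fin (k + 1), ∑ j, w j * a (m + i + j) = 0 := by
    intro m
    obtain ⟨w, hw, hrel⟩ := exists_hankel_relation (hbig m)
    exact ⟨w, fun h0 => hw (tail_eq_zero_of_hankel_relation (h _)
      (fun i => by simpa using hrel i.castSucc) h0), fun h0 => hw
        (init_eq_zero_of_hankel_relation (h _) (fun i => by simpa using hrel i.castSucc) h0), hrel⟩
  obtain ⟨w, hw0, hwl, hrel⟩ := hloc 0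
  refine ⟨w, hw0, hwl, ?_⟩
  set b : ℤ → ℂ := fun m => ∑ j, w j * a (m + j) with hb
  have hsymm : ∀ (m : ℤ) (v : Fin (k + 1) → ℂ),
      (∀ i : Fin (k + 1), ∑ j, v j * a (m + i + j) = 0) → ∑ i, v i * b (m + i) = 0 := by
    intro m v hv
    simp only [hb, Finset.mul_sum]
    rw [Finset.sum_comm]
    refine Finset.sum_eq_zero fun j _ => ?_
    have : ∑ i, w j * (v i * a (m + j + i)) = 0 := by rw [← Finset.mul_sum, hv j, mul_zero]
    rw [← this]
    refine Finset.sum_congr rfl fun i _ => ?_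
    rw [add_right_comm]
    ring
  have hwin : ∀ m : ℤ, ∀ i : Fin (k + 1), b (m + i) = 0 := by
    intro m
    induction m using Int.induction_on with
    | zero => exact hrel
    | succ m ih =>
      obtain ⟨v, _, hvl, hv⟩ := hloc (m + 1)
      have hcast : ∀ i : Fin k, b (m + 1 + i) = 0 := fun i => by
        have := ih i.succ
        push_cast [Fin.val_succ] at this
        rwa [add_right_comm, add_assoc]
      have hs := hsymm _ v hv
      rw [Fin.sum_univ_castSucc] at hs
      simp only [Fin.val_castSucc, hcast, mul_zero, Finset.sum_const_zero, zero_add,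
        mul_eq_zero, hvl, false_or] at hs
      intro i
      induction i using Fin.lastCases with
      | last => exact hs
      | cast i => exact hcast i
    | pred m ih =>
      obtain ⟨v, hv0, _, hv⟩ := hloc (-m - 1)
      have hsucc : ∀ i : Fin k, b (-m - 1 + (i.succ : ℕ)) = 0 := fun i => by
        have := ih i.castSucc
        push_cast [Fin.val_succ]
        convert this using 2
        simp
      have hs := hsymm _ v hv
      rw [Fin.sum_univ_succ] at hs
      simp only [hsucc, mul_zero, Finset.sum_const_zero, add_zero,
        mul_eq_zero, hv0, false_or] at hs
      intro i
      induction i using Fin.cases with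
      | zero => exact hs
      | succ i => exact hsucc i
  intro m
  simpa using hwin m 0

lemma exists_finrank_le_of_recurrence {a : ℤ → ℂ} {k : ℕ} {w : Fin (k + 1) → ℂ}
    (hw0 : w 0 ≠ 0) (hwl : w (Fin.last k) ≠ 0) (hrec : ∀ m : ℤ, ∑ j, w j * a (m + j) = 0) :
    ∃ V : Submodule ℂ (ℤ → ℂ), FiniteDimensional ℂ V ∧ Module.finrank ℂ V ≤ k ∧
      ∀ q : ℤ, (fun m => a (m + q)) ∈ V := by
  set τ : ℤ → ℤ → ℂ := fun q m => a (m + q) with hτ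
  have hrel : ∀ q : ℤ, ∑ j, w j • τ (q + (j : ℕ)) = 0 := by
    intro q
    ext m
    simpa [hτ, add_assoc] using hrec (m + q)
  set V := Submodule.span ℂ (Set.range fun j : Fin k => τ (j : ℕ))
  have hlast : ∀ q : ℤ, (∀ j : Fin k, τ (q + (j : ℕ)) ∈ V) → τ (q + k) ∈ V := by
    intro q hq
    have h := hrel q
    rw [Fin.sum_univ_castSucc] at h
    have hmem : w (Fin.last k) • τ (q + k) ∈ V := by
      change w (Fin.last k) • τ (q + ((Fin.last k : Fin (k + 1)) : ℕ)) ∈ V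
      rw [← neg_eq_of_add_eq_zero_right h]
      exact V.neg_mem (V.sum_mem fun j _ => V.smul_mem _ (hq j))
    exact (V.smul_mem_iff hwl).mp hmem
  have hfirst : ∀ q : ℤ, (∀ j : Fin k, τ (q + (j.succ : ℕ)) ∈ V) → τ q ∈ V := by
    intro q hq
    have h := hrel q
    rw [Fin.sum_univ_succ] at h
    have hmem : w 0 • τ q ∈ V := by
      have := neg_eq_of_add_eq_zero_left h
      simp only [Fin.val_zero, Nat.cast_zero, add_zero] at this
      rw [← this]
      exact V.neg_mem (V.sum_mem fun j _ => V.smul_mem _ (hq j))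
    exact (V.smul_mem_iff hw0).mp hmem
  have hwin : ∀ q : ℤ, ∀ j : Fin k, τ (q + (j : ℕ)) ∈ V := by
    intro q
    induction q using Int.induction_on with
    | zero => intro j; simpa using Submodule.subset_span (Set.mem_range_self j)
    | succ q ih =>
      intro j
      by_cases hj : (j : ℕ) + 1 < k
      · convert ih ⟨j + 1, hj⟩ using 2
        push_cast
        ring
      · convert hlast q ih using 2
        omega
    | pred q ih =>
      rintro ⟨j, hj⟩
      cases j with
      | zero =>
        have := hfirst (-q - 1) fun j => by
          convert ih j using 2
          push_cast [Fin.val_succ]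
          ring
        simpa using this
      | succ j =>
        convert ih ⟨j, by omega⟩ using 2
        push_cast
        ring
  refine ⟨V, FiniteDimensional.span_of_finite ℂ (Set.finite_range _), ?_, fun q => ?_⟩
  · exact (finrank_range_le_card (R := ℂ) fun j : Fin k => τ (j : ℕ)).trans_eq (by simp)
  · simpa using hlast (q - k) (hwin _)

lemma det_shifts_eq_zero_of_hankel {a : ℤ → ℂ} {n : ℕ}
    (h : ∀ m, (hankelMatrix a (n + 1) m).det = 0) (p q : Fin (n + 1) → ℤ) :
    (Matrix.of fun i j => a (p i + q j)).det = 0 := by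
  classical
  have hex : ∃ k, ∀ m, (hankelMatrix a k m).det = 0 := ⟨n + 1, h⟩
  obtain ⟨k, hk⟩ : ∃ k, Nat.find hex = k + 1 := by
    refine Nat.exists_eq_succ_of_ne_zero fun h0 => ?_
    have := Nat.find_spec hex 0
    rw [h0] at this
    simp at this
  have hkn : k ≤ n := by
    have := Nat.find_min' hex h
    omega
  have hbig := Nat.find_spec hex
  rw [hk] at hbig
  have hmin := Nat.find_min hex (m := k) (by omega)
  push Not at hmin
  obtain ⟨m₀, hm₀⟩ := hmin
  obtain ⟨w, hw0, hwl, hrec⟩ := exists_recurrence hbig (det_hankelMatrix_ne_zero hbig hm₀)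
  obtain ⟨V, hfin, hrank, hV⟩ := exists_finrank_le_of_recurrence hw0 hwl hrec
  have hdep : ¬ LinearIndependent ℂ fun j => (⟨fun m => a (m + q j), hV (q j)⟩ : V) := by
    intro hli
    have := hli.fintype_card_le_finrank
    simp at this
    omega
  obtain ⟨c, hc, i, hi⟩ := Fintype.not_linearIndependent_iff.mp hdep
  refine Matrix.exists_mulVec_eq_zero_iff.mp ⟨c, fun h0 => hi (congrFun h0 i), ?_⟩
  ext r
  have := congrFun (congrArg Subtype.val hc) (p r)
  simpa [Matrix.mulVec, dotProduct, mul_comm] using this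

lemma tendsto_intFloor_mul_div_atTop (s : ℝ) :
    Filter.Tendsto (fun N : ℕ => (⌊s * ((N : ℝ) + 1)⌋ : ℝ) * (1 / ((N : ℝ) + 1)))
      Filter.atTop (nhds s) := by
  have h0 := tendsto_one_div_add_atTop_nhds_zero_nat (𝕜 := ℝ)
  have hlow : Filter.Tendsto (fun N : ℕ => s - 1 / ((N : ℝ) + 1)) Filter.atTop (nhds s) := by
    simpa using h0.const_sub s
  refine tendsto_of_tendsto_of_tendsto_of_le_of_le hlow tendsto_const_nhds (fun N => ?_)
    fun N => ?_
  · have hN : (0 : ℝ) < (N : ℝ) + 1 := by positivity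
    have := (Int.sub_one_lt_floor (s * ((N : ℝ) + 1))).le
    simp only [mul_one_div]
    rw [le_div_iff₀ hN, sub_mul, one_div_mul_cancel hN.ne']
    exact this
  · have hN : (0 : ℝ) < (N : ℝ) + 1 := by positivity
    simp only [mul_one_div]
    rw [div_le_iff₀ hN]
    exact Int.floor_le _

lemma det_translates_eq_zero {F : ℝ → ℂ} (hF : Continuous F) {n : ℕ}
    (heq : ∀ x h : ℝ,
      (Matrix.of fun i j : Fin (n + 1) => F (x + ((i : ℕ) + (j : ℕ)) • h)).det = 0)
    (s t : Fin (n + 1) → ℝ) : (Matrix.of fun i j => F (s i + t j)).det = 0 := by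
  have hgrid : ∀ (h : ℝ) (p q : Fin (n + 1) → ℤ),
      (Matrix.of fun i j => F (p i * h + q j * h)).det = 0 := by
    intro h p q
    have := det_shifts_eq_zero_of_hankel (a := fun m : ℤ => F (m * h)) (n := n)
      (fun m => by
        rw [← heq (m * h) h]
        congr 1
        ext i j
        simp only [hankelMatrix, Matrix.of_apply, nsmul_eq_mul]
        push_cast
        congr 1
        ring) p q
    simpa [add_mul] using this
  have hlim : Filter.Tendsto (fun N : ℕ => (Matrix.of fun i j =>
      F ((⌊s i * ((N : ℝ) + 1)⌋ : ℝ) * (1 / ((N : ℝ) + 1)) +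
        (⌊t j * ((N : ℝ) + 1)⌋ : ℝ) * (1 / ((N : ℝ) + 1)))).det) Filter.atTop
      (nhds (Matrix.of fun i j => F (s i + t j)).det) := by
    refine ((continuous_id.matrix_det).tendsto _).comp ?_
    refine tendsto_pi_nhds.mpr fun i => tendsto_pi_nhds.mpr fun j => ?_
    exact (hF.tendsto _).comp
      ((tendsto_intFloor_mul_div_atTop (s i)).add (tendsto_intFloor_mul_div_atTop (t j)))
  simp only [hgrid] at hlim
  exact tendsto_nhds_unique hlim tendsto_const_nhds

/-- A function all of whose `(n + 1) × (n + 1)` minors `det F (s i + t j)` vanish satisfies an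
addition formula of finite rank. -/
lemma exists_addition_formula {F : ℝ → ℂ} {n : ℕ}
    (hdet : ∀ s t : Fin (n + 1) → ℝ, (Matrix.of fun i j => F (s i + t j)).det = 0) :
    ∃ (r : ℕ) (s t : Fin r → ℝ), IsUnit (Matrix.of fun i j => F (s i + t j)).det ∧
      ∀ x y, F (x + y) = (fun j => F (x + t j)) ⬝ᵥ
        ((Matrix.of fun i j => F (s i + t j))⁻¹.mulVec fun i => F (s i + y)) := by
  classical
  have hex : ∃ k, ∀ s t : Fin k → ℝ, (Matrix.of fun i j => F (s i + t j)).det = 0 :=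
    ⟨n + 1, hdet⟩
  obtain ⟨r, hr⟩ : ∃ r, Nat.find hex = r + 1 := by
    refine Nat.exists_eq_succ_of_ne_zero fun h0 => ?_
    have := Nat.find_spec hex
    rw [h0] at this
    simpa using this Fin.elim0 Fin.elim0
  have hbig := Nat.find_spec hex
  rw [hr] at hbig
  have hmin := Nat.find_min hex (m := r) (by omega)
  push Not at hmin
  obtain ⟨s, t, hst⟩ := hmin
  refine ⟨r, s, t, hst.isUnit, fun x y => ?_⟩
  set B : Matrix (Fin r) (Fin r) ℂ := Matrix.of fun i j => F (s i + t j) with hB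
  have : Invertible B := B.invertibleOfIsUnitDet hst.isUnit
  set σ : Fin r ⊕ Fin 1 → ℝ := Sum.elim s fun _ => x
  set τ : Fin r ⊕ Fin 1 → ℝ := Sum.elim t fun _ => y
  have hblock : (Matrix.fromBlocks B (Matrix.of fun i (_ : Fin 1) => F (s i + y))
      (Matrix.of fun (_ : Fin 1) j => F (x + t j))
      (Matrix.of fun (_ _ : Fin 1) => F (x + y))).det = 0 := by
    rw [← Matrix.det_submatrix_equiv_self finSumFinEquiv.symm]
    rw [← hbig (σ ∘ finSumFinEquiv.symm) (τ ∘ finSumFinEquiv.symm)]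
    congr 1
    ext i j
    simp only [Matrix.submatrix_apply, Matrix.of_apply, Function.comp_apply]
    rcases finSumFinEquiv.symm i with i | i <;> rcases finSumFinEquiv.symm j with j | j <;> rfl
  rw [Matrix.det_fromBlocks₁₁, mul_eq_zero, or_iff_right hst, Matrix.det_fin_one,
    Matrix.sub_apply, sub_eq_zero, Matrix.invOf_eq_nonsing_inv, Matrix.mul_assoc] at hblock
  exact hblock

section OneParameter

variable {𝔸 : Type*} [NormedRing 𝔸]

lemma exists_isUnit_integral [NormedAlgebra ℝ 𝔸] [CompleteSpace 𝔸] {M : ℝ → 𝔸}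
    (hM : Continuous M) (h0 : M 0 = 1) : ∃ ε : ℝ, IsUnit (∫ y in (0 : ℝ)..ε, M y) := by
  have hd := (hM.integral_hasStrictDerivAt 0 0).hasDerivAt
  rw [hasDerivAt_iff_tendsto_slope_zero] at hd
  simp only [zero_add, intervalIntegral.integral_same, sub_zero, h0] at hd
  have hev := hd.eventually (Units.isOpen.mem_nhds (show IsUnit (1 : 𝔸) from isUnit_one))
  obtain ⟨ε, hε, hne⟩ := (hev.and self_mem_nhdsWithin).exists
  refine ⟨ε, ?_⟩
  have hu : IsUnit (algebraMap ℝ 𝔸 ε) := (IsUnit.mk0 ε hne).map _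
  have := hu.mul hε
  rwa [← Algebra.smul_def, smul_inv_smul₀ hne] at this

/-- A norm-continuous one-parameter group in a Banach algebra is an exponential. -/
lemma exists_eq_exp_smul [NormedAlgebra ℝ 𝔸] [CompleteSpace 𝔸] {M : ℝ → 𝔸}
    (hM : Continuous M) (h0 : M 0 = 1) (hadd : ∀ x y, M (x + y) = M x * M y) :
    ∃ A : 𝔸, ∀ t : ℝ, M t = NormedSpace.exp (t • A) := by
  obtain ⟨ε, C, hC⟩ := exists_isUnit_integral hM h0
  have hMC : ∀ x, M x = (∫ y in x..x + ε, M y) * ↑C⁻¹ := by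
    intro x
    rw [Units.eq_mul_inv_iff_mul_eq, hC]
    have h1 := intervalIntegral.integral_comp_add_left (a := 0) (b := ε) M x
    have h2 := (ContinuousLinearMap.mul ℝ 𝔸 (M x)).intervalIntegral_comp_comm
      (hM.intervalIntegrable (μ := MeasureTheory.volume) 0 ε)
    simp only [ContinuousLinearMap.mul_apply'] at h2
    rw [← h2]
    simpa [hadd] using h1
  set A : 𝔸 := (M ε - 1) * ↑C⁻¹ with hA
  have hderiv : ∀ x, HasDerivAt M (M x * A) x := by
    intro x
    have hI : ∀ y, HasDerivAt (fun u => ∫ z in (0 : ℝ)..u, M z) (M y) y := fun y =>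
      (hM.integral_hasStrictDerivAt 0 y).hasDerivAt
    have hd := (((hI (x + ε)).comp_add_const x ε).sub (hI x)).mul_const (↑C⁻¹ : 𝔸)
    have hval : (M (x + ε) - M x) * ↑C⁻¹ = M x * A := by
      rw [hadd, hA, ← mul_assoc, mul_sub, mul_one]
    rw [hval] at hd
    refine hd.congr_of_eventuallyEq (Filter.Eventually.of_forall fun y => ?_)
    rw [hMC y]
    simp only [Pi.sub_apply]
    rw [intervalIntegral.integral_interval_sub_left (hM.intervalIntegrable _ _)
      (hM.intervalIntegrable _ _)]
  refine ⟨A, fun t => ?_⟩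
  let _ : NormedAlgebra ℚ 𝔸 := NormedAlgebra.restrictScalars ℚ ℝ 𝔸
  have hprod : ∀ x, HasDerivAt (fun x => M x * NormedSpace.exp (x • -A)) 0 x := by
    intro x
    have hd := (hderiv x).mul (hasDerivAt_exp_smul_const' (-A) x)
    rw [neg_mul, mul_neg, mul_assoc, add_neg_cancel] at hd
    exact hd
  have hconst : M t * NormedSpace.exp (t • -A) = 1 := by
    have := is_const_of_deriv_eq_zero (fun x => (hprod x).differentiableAt)
      (fun x => (hprod x).deriv) t 0
    simpa [h0, NormedSpace.exp_zero] using this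
  have hinv : NormedSpace.exp (t • -A) * NormedSpace.exp (t • A) = 1 := by
    rw [← NormedSpace.exp_add_of_commute (by simp)]
    simp [NormedSpace.exp_zero]
  calc M t = M t * (NormedSpace.exp (t • -A) * NormedSpace.exp (t • A)) := by rw [hinv, mul_one]
    _ = NormedSpace.exp (t • A) := by rw [← mul_assoc, hconst, one_mul]

lemma IsExpPoly1.zero : IsExpPoly1 fun _ => 0 :=
  ⟨0, Fin.elim0, Fin.elim0, fun _ => by simp⟩

lemma IsExpPoly1.add {f g : ℝ → ℂ} (hf : IsExpPoly1 f) (hg : IsExpPoly1 g) :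
    IsExpPoly1 fun t => f t + g t := by
  obtain ⟨m, P, lam, hP⟩ := hf
  obtain ⟨k, Q, mu, hQ⟩ := hg
  refine ⟨m + k, Fin.append P Q, Fin.append lam mu, fun t => ?_⟩
  simp [hP, hQ, Fin.sum_univ_add]

lemma isExpPoly1_polynomial_mul_exp (Q : Polynomial ℂ) (mu : ℂ) :
    IsExpPoly1 fun t => Q.eval (t : ℂ) * Complex.exp (mu * t) :=
  ⟨1, fun _ => Q, fun _ => mu, fun t => by simp⟩

lemma exp_mul_eq_sum_of_pow_mul_eq_zero [NormedAlgebra ℂ 𝔸] [CompleteSpace 𝔸] {N v : 𝔸} {k : ℕ}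
    (h : N ^ k * v = 0) :
    NormedSpace.exp N * v = ∑ j ∈ Finset.range k, ((j.factorial : ℂ)⁻¹) • (N ^ j * v) := by
  rw [NormedSpace.exp_eq_tsum ℂ]
  simp only
  rw [← (NormedSpace.expSeries_summable' (𝕂 := ℂ) N).tsum_mul_right v,
    tsum_eq_sum (s := Finset.range k)]
  · simp
  · intro j hj
    obtain ⟨i, rfl⟩ := Nat.exists_eq_add_of_le (not_lt.mp fun hlt => hj (Finset.mem_range.mpr hlt))
    rw [smul_mul_assoc, add_comm k i, pow_add, mul_assoc, h, mul_zero, smul_zero]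

lemma isExpPoly1_exp_smul_mul [NormedAlgebra ℂ 𝔸] [CompleteSpace 𝔸] (L : 𝔸 →ₗ[ℂ] ℂ)
    {A v : 𝔸} {mu : ℂ} {k : ℕ} (h : (A - algebraMap ℂ 𝔸 mu) ^ k * v = 0) :
    IsExpPoly1 fun t => L (NormedSpace.exp ((t : ℂ) • A) * v) := by
  let _ : NormedAlgebra ℚ 𝔸 := NormedAlgebra.restrictScalars ℚ ℂ 𝔸
  set N := A - algebraMap ℂ 𝔸 mu with hN
  convert isExpPoly1_polynomial_mul_exp (∑ j ∈ Finset.range k,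
    Polynomial.monomial j (((j.factorial : ℂ)⁻¹) * L (N ^ j * v))) mu using 2 with t
  have hsplit : (t : ℂ) • A = algebraMap ℂ 𝔸 (mu * t) + (t : ℂ) • N := by
    simp [hN, smul_sub, Algebra.algebraMap_eq_smul_one, smul_smul, mul_comm]
  have hnil : ((t : ℂ) • N) ^ k * v = 0 := by
    rw [smul_pow, smul_mul_assoc, h, smul_zero]
  rw [hsplit, NormedSpace.exp_add_of_commute (Algebra.commutes _ _), mul_assoc,
    exp_mul_eq_sum_of_pow_mul_eq_zero hnil, ← NormedSpace.algebraMap_exp_comm,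
    ← Algebra.smul_def, ← Complex.exp_eq_exp_ℂ, map_smul, map_sum, Polynomial.eval_finsetSum,
    smul_eq_mul, mul_comm]
  congr 1
  refine Finset.sum_congr rfl fun j _ => ?_
  rw [smul_pow, smul_mul_assoc, map_smul, map_smul, Polynomial.eval_monomial, smul_eq_mul,
    smul_eq_mul]
  ring

lemma isExpPoly1_exp_smul [NormedAlgebra ℂ 𝔸] [FiniteDimensional ℂ 𝔸] (L : 𝔸 →ₗ[ℂ] ℂ) (A : 𝔸) :
    IsExpPoly1 fun t => L (NormedSpace.exp ((t : ℂ) • A)) := by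
  have : CompleteSpace 𝔸 := FiniteDimensional.complete ℂ 𝔸
  suffices h : ∀ v : 𝔸, IsExpPoly1 fun t => L (NormedSpace.exp ((t : ℂ) • A) * v) by
    simpa using h 1
  intro v
  have hv : v ∈ ⨆ mu, Module.End.maxGenEigenspace (LinearMap.mulLeft ℂ A) mu := by
    rw [Module.End.iSup_maxGenEigenspace_eq_top]
    exact Submodule.mem_top
  refine Submodule.iSup_induction _
    (motive := fun v => IsExpPoly1 fun t => L (NormedSpace.exp ((t : ℂ) • A) * v)) hv
    (fun mu v hv => ?_) (by simpa using IsExpPoly1.zero) fun v w hv hw => by simpa [mul_add] using hv.add hw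
  obtain ⟨k, hk⟩ := (Module.End.mem_maxGenEigenspace _ _ _).mp hv
  refine isExpPoly1_exp_smul_mul (mu := mu) (k := k) L ?_
  have hsub : LinearMap.mulLeft ℂ A - mu • 1 = LinearMap.mulLeft ℂ (A - algebraMap ℂ 𝔸 mu) := by
    ext w
    simp [sub_mul, Algebra.smul_def]
  rwa [hsub, LinearMap.pow_mulLeft, LinearMap.mulLeft_apply] at hk

lemma isExpPoly1_of_oneParameter [NormedAlgebra ℂ 𝔸] [FiniteDimensional ℂ 𝔸] {M : ℝ → 𝔸}
    (hM : Continuous M) (h0 : M 0 = 1) (hadd : ∀ x y, M (x + y) = M x * M y) (L : 𝔸 →ₗ[ℂ] ℂ) :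
    IsExpPoly1 fun t => L (M t) := by
  have : CompleteSpace 𝔸 := FiniteDimensional.complete ℂ 𝔸
  let _ : NormedAlgebra ℝ 𝔸 := NormedAlgebra.restrictScalars ℝ ℂ 𝔸
  obtain ⟨A, hA⟩ := exists_eq_exp_smul hM h0 hadd
  simpa [hA] using isExpPoly1_exp_smul L A

end OneParameter

attribute [local instance] Matrix.linftyOpNormedRing Matrix.linftyOpNormedAlgebra

lemma isExpPoly1_of_addition_formula {F : ℝ → ℂ} (hF : Continuous F) {r : ℕ} {s t : Fin r → ℝ}
    (hunit : IsUnit (Matrix.of fun i j => F (s i + t j)).det)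
    (hadd : ∀ x y, F (x + y) = (fun j => F (x + t j)) ⬝ᵥ
      ((Matrix.of fun i j => F (s i + t j))⁻¹.mulVec fun i => F (s i + y))) :
    IsExpPoly1 F := by
  set B₀ : Matrix (Fin r) (Fin r) ℂ := Matrix.of fun i j => F (s i + t j) with hB₀
  set B : ℝ → Matrix (Fin r) (Fin r) ℂ := fun x => Matrix.of fun i j => F (s i + x + t j) with hB
  have hBmul : ∀ x y, B (x + y) = B x * B₀⁻¹ * B y := by
    intro x y
    ext i j
    have h := hadd (s i + x) (y + t j)
    rw [Matrix.mul_assoc, Matrix.mul_apply']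
    simp only [hB, Matrix.of_apply]
    rw [← add_assoc, add_assoc (s i) x y] at h
    rw [h]
    simp only [dotProduct, Matrix.mulVec, Matrix.mul_apply, Matrix.of_apply, add_assoc]
  have hBcont : Continuous B := by
    refine continuous_pi fun i => continuous_pi fun j => ?_
    exact hF.comp (by fun_prop)
  let α : Fin r → ℂ := Matrix.vecMul (fun j => F (t j)) B₀⁻¹
  let β : Fin r → ℂ := B₀⁻¹.mulVec fun i => F (s i)
  have hFB : ∀ x, F x = α ⬝ᵥ (B x).mulVec β := by
    intro x
    have h := hadd 0 x
    simp only [zero_add, Matrix.dotProduct_mulVec] at h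
    rw [h]
    congr 1
    ext i
    have h' := hadd (s i + x) 0
    simp only [add_zero] at h'
    exact h'
  let L : Matrix (Fin r) (Fin r) ℂ →ₗ[ℂ] ℂ :=
    { toFun := fun X => α ⬝ᵥ (X * B₀).mulVec β
      map_add' := fun X Y => by rw [Matrix.add_mul, Matrix.add_mulVec, dotProduct_add]
      map_smul' := fun c X => by
        rw [Matrix.smul_mul, Matrix.smul_mulVec, dotProduct_smul, RingHom.id_apply] }
  have h := isExpPoly1_of_oneParameter (M := fun x => B x * B₀⁻¹)
    (hBcont.mul continuous_const)
    (by
      have : B 0 = B₀ := by simp [hB, hB₀]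
      rw [this, Matrix.mul_nonsing_inv _ hunit])
    (fun x y => by rw [hBmul, ← Matrix.mul_assoc]) L
  convert h using 2 with x
  simp only [L, LinearMap.coe_mk, AddHom.coe_mk, Matrix.mul_assoc,
    Matrix.nonsing_inv_mul _ hunit, Matrix.mul_one]
  exact hFB x

theorem popoviciu_ionescu_line_restriction_expPoly
    {d n : ℕ} (hn : 1 ≤ n) (f : (Fin d → ℝ) → ℂ) (hf : Continuous f)
    (heq : ∀ x h : Fin d → ℝ,
      Matrix.det (fun i j : Fin (n + 1) => f (x + ((i : ℕ) + (j : ℕ)) • h)) = 0) :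
    ∀ x₀ h₀ : Fin d → ℝ, IsExpPoly1 (fun t : ℝ => f (x₀ + t • h₀)) := by
  intro x₀ h₀
  have hF : Continuous fun t : ℝ => f (x₀ + t • h₀) := by fun_prop
  have hline : ∀ x h : ℝ, (Matrix.of fun i j : Fin (n + 1) =>
      f (x₀ + (x + ((i : ℕ) + (j : ℕ)) • h) • h₀)).det = 0 := by
    intro x h
    rw [← heq (x₀ + x • h₀) (h • h₀)]
    congr 1
    ext i j
    rw [Matrix.of_apply, add_smul, smul_assoc, add_assoc]
  obtain ⟨r, s, t, hunit, hadd⟩ := exists_addition_formula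
    (F := fun t : ℝ => f (x₀ + t • h₀)) (det_translates_eq_zero hF hline)
  exact isExpPoly1_of_addition_formula hF hunit hadd
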